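/- Let (S,d) be a complete separable metric space in which any two elements have distance at most one. Then the unbalanced Wasserstein distance W is a metric on M_{≤1}(S); moreover, restricted to Borel probability measures it coincides with the classical Wasserstein distance, i.e., for probability measures μ,ν on S, W(μ,ν) = inf_γ ∫_{S×S} d(x,y) dγ(x,y), where the infimum is over all couplings γ of μ and ν (probability measures on S×S with marginals μ and ν). -/

import Mathlib

open MeasureTheory Set

noncomputable section

def uwAux {X : Type _} [MeasurableSpace X] (d : X → X → ℝ) (μ ν : Measure X) : ℝ :=
  (μ Set.univ).toReal - (ν Set.univ).toReal +
    sInf {r : ℝ | ∃ γ : Measure (X × X), γ Set.univ ≤ 1 ∧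
      γ.map Prod.fst ≤ μ ∧ γ.map Prod.snd = ν ∧ r = ∫ p, d p.1 p.2 ∂γ}

open Classical in
/-- The unbalanced Wasserstein distance w.r.t. a distance function `d`:
`‖μ‖ - ‖ν‖` plus the optimal transport cost over sub-couplings, where w.l.o.g.
`‖μ‖ ≥ ‖ν‖`. -/
def uwDist {X : Type _} [MeasurableSpace X] (d : X → X → ℝ) (μ ν : Measure X) : ℝ :=
  if ν Set.univ ≤ μ Set.univ then uwAux d μ ν else uwAux d ν μ

/-- The classical Wasserstein distance (over couplings) w.r.t. a cost `d`. -/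
def wassersteinDist {X : Type _} [MeasurableSpace X] (d : X → X → ℝ)
    (μ ν : Measure X) : ℝ :=
  sInf {r : ℝ | ∃ γ : Measure (X × X),
    γ.map Prod.fst = μ ∧ γ.map Prod.snd = ν ∧ r = ∫ p, d p.1 p.2 ∂γ}


section helpers
set_option linter.unusedSectionVars false
set_option linter.style.haveILetI false
open ProbabilityTheory
open scoped ENNReal

variable {S : Type} [MetricSpace S] [CompleteSpace S]
    [TopologicalSpace.SeparableSpace S] [MeasurableSpace S] [BorelSpace S]

lemma uw_fin {X : Type} [MeasurableSpace X] {μ : Measure X} (h : μ univ ≤ 1) : IsFiniteMeasure μ :=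
  ⟨lt_of_le_of_lt h ENNReal.one_lt_top⟩

lemma uw_mass_fst (γ : Measure (S × S)) : γ.map Prod.fst univ = γ univ := by
  rw [Measure.map_apply measurable_fst MeasurableSet.univ]; simp

lemma uw_mass_snd (γ : Measure (S × S)) : γ.map Prod.snd univ = γ univ := by
  rw [Measure.map_apply measurable_snd MeasurableSet.univ]; simp

lemma uw_integrable (hd : ∀ x y : S, dist x y ≤ 1) {X : Type} [MeasurableSpace X]
    (γ : Measure X) [IsFiniteMeasure γ] (f g : X → S) (hf : Measurable f) (hg : Measurable g) :
    Integrable (fun p => dist (f p) (g p)) γ := by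
  haveI : SecondCountableTopology S := UniformSpace.secondCountable_of_separable S
  refine Integrable.of_bound (C := 1) (hf.dist hg).aestronglyMeasurable ?_
  filter_upwards with p
  simpa using hd _ _

lemma uw_cost_nonneg (γ : Measure (S × S)) : 0 ≤ ∫ p, dist p.1 p.2 ∂γ :=
  integral_nonneg fun _ => dist_nonneg

lemma uw_cost_le (hd : ∀ x y : S, dist x y ≤ 1) (γ : Measure (S × S)) [IsFiniteMeasure γ] :
    ∫ p, dist p.1 p.2 ∂γ ≤ (γ univ).toReal := by
  have := integral_mono (uw_integrable hd γ _ _ measurable_fst measurable_snd)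
    (integrable_const (1:ℝ)) (fun p => hd p.1 p.2)
  simpa [Measure.real] using this

lemma uw_bdd (μ ν : Measure S) : BddBelow {r : ℝ | ∃ γ : Measure (S × S), γ Set.univ ≤ 1 ∧
      γ.map Prod.fst ≤ μ ∧ γ.map Prod.snd = ν ∧ r = ∫ p, dist p.1 p.2 ∂γ} := by
  refine ⟨0, ?_⟩
  rintro r ⟨γ, -, -, -, rfl⟩
  exact uw_cost_nonneg γ

lemma uw_extend (μ ν : Measure S) (hμ : μ univ ≤ 1) (hν : ν univ ≤ 1)
    (h : ν univ ≤ μ univ) (γ : Measure (S × S)) (h1 : γ.map Prod.fst ≤ μ)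
    (h2 : γ.map Prod.snd ≤ ν) :
    ∃ π : Measure (S × S), (γ + π).map Prod.fst ≤ μ ∧ (γ + π).map Prod.snd = ν := by
  haveI := uw_fin hμ
  haveI := uw_fin hν
  haveI : IsFiniteMeasure γ := uw_fin (by
    rw [← uw_mass_fst]; exact (h1 univ).trans hμ)
  set m := μ - γ.map Prod.fst with hm
  set n := ν - γ.map Prod.snd with hn
  have em : m + γ.map Prod.fst = μ := Measure.sub_add_cancel_of_le h1
  have en : n + γ.map Prod.snd = ν := Measure.sub_add_cancel_of_le h2
  have hnm : n univ ≤ m univ := by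
    have a1 : m univ + γ univ = μ univ := by
      rw [← uw_mass_fst γ, ← Measure.add_apply, em]
    have a2 : n univ + γ univ = ν univ := by
      rw [← uw_mass_snd γ, ← Measure.add_apply, en]
    rw [← a1, ← a2] at h
    exact (ENNReal.add_le_add_iff_right (measure_ne_top _ _)).1 h
  haveI : IsFiniteMeasure m := by rw [hm]; infer_instance
  haveI : IsFiniteMeasure n := by rw [hn]; infer_instance
  refine ⟨(m univ)⁻¹ • m.prod n, ?_, ?_⟩
  · rw [Measure.map_add _ _ measurable_fst, Measure.map_smul]
    rw [show (m.prod n).map Prod.fst = n univ • m from Measure.map_fst_prod, smul_smul]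
    conv_rhs => rw [← em, add_comm]
    gcongr
    have : (m univ)⁻¹ * n univ ≤ 1 := by
      calc (m univ)⁻¹ * n univ ≤ (m univ)⁻¹ * m univ := by gcongr
        _ ≤ 1 := ENNReal.inv_mul_le_one _
    intro s
    simp only [Measure.smul_apply, smul_eq_mul]
    calc _ ≤ 1 * m s := by gcongr
      _ = m s := one_mul _
  · rw [Measure.map_add _ _ measurable_snd, Measure.map_smul]
    rw [show (m.prod n).map Prod.snd = m univ • n from Measure.map_snd_prod, smul_smul]
    conv_rhs => rw [← en, add_comm]
    congr 1
    by_cases h0 : m univ = 0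
    · have : n univ = 0 := le_antisymm (hnm.trans h0.le) bot_le
      rw [Measure.measure_univ_eq_zero.1 this]; simp
    · rw [ENNReal.inv_mul_cancel h0 (measure_ne_top _ _), one_smul]

lemma uw_aux_le (hd : ∀ x y : S, dist x y ≤ 1) (μ ν : Measure S) (hμ : μ univ ≤ 1)
    (hν : ν univ ≤ 1)
    (h : ν univ ≤ μ univ) (γ : Measure (S × S)) (h1 : γ.map Prod.fst ≤ μ)
    (h2 : γ.map Prod.snd ≤ ν) :
    uwAux dist μ ν ≤ ∫ p, dist p.1 p.2 ∂γ + (μ univ).toReal - (γ univ).toReal := by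
  obtain ⟨π, p1, p2⟩ := uw_extend μ ν hμ hν h γ h1 h2
  have hm : (γ + π) univ = ν univ := by rw [← uw_mass_snd, p2]
  haveI : IsFiniteMeasure (γ + π) := uw_fin (hm.trans_le hν)
  haveI : IsFiniteMeasure γ := isFiniteMeasure_of_le _ (Measure.le_add_right le_rfl : γ ≤ γ + π)
  haveI : IsFiniteMeasure π := isFiniteMeasure_of_le _ (Measure.le_add_left le_rfl : π ≤ γ + π)
  have := csInf_le (uw_bdd μ ν) ⟨γ + π, hm.trans_le hν, p1, p2, rfl⟩
  rw [integral_add_measure (uw_integrable hd γ _ _ measurable_fst measurable_snd)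
    (uw_integrable hd π _ _ measurable_fst measurable_snd)] at this
  have c := uw_cost_le hd π
  have hm' : (γ univ).toReal + (π univ).toReal = (ν univ).toReal := by
    rw [← ENNReal.toReal_add (measure_ne_top _ _) (measure_ne_top _ _), ← Measure.add_apply, hm]
  unfold uwAux
  linarith

lemma uw_swap (γ : Measure (S × S)) :
    (γ.map Prod.swap).map Prod.fst = γ.map Prod.snd ∧
    (γ.map Prod.swap).map Prod.snd = γ.map Prod.fst ∧
    ∫ p, dist p.1 p.2 ∂(γ.map Prod.swap) = ∫ p, dist p.1 p.2 ∂γ ∧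
    γ.map Prod.swap univ = γ univ := by
  refine ⟨?_, ?_, ?_, ?_⟩
  · rw [Measure.map_map measurable_fst measurable_swap]; rfl
  · rw [Measure.map_map measurable_snd measurable_swap]; rfl
  · rw [show (Prod.swap : S × S → S × S) = MeasurableEquiv.prodComm from rfl,
      integral_map_equiv]
    simp [MeasurableEquiv.prodComm, dist_comm]
  · rw [Measure.map_apply measurable_swap MeasurableSet.univ]; simp

lemma uw_le (hd : ∀ x y : S, dist x y ≤ 1) (μ ν : Measure S) (hμ : μ univ ≤ 1)
    (hν : ν univ ≤ 1) (γ : Measure (S × S)) (h1 : γ.map Prod.fst ≤ μ)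
    (h2 : γ.map Prod.snd ≤ ν) :
    uwDist dist μ ν ≤ ∫ p, dist p.1 p.2 ∂γ + max (μ univ).toReal (ν univ).toReal
      - (γ univ).toReal := by
  unfold uwDist
  split_ifs with h
  · have := uw_aux_le hd μ ν hμ hν h γ h1 h2
    have := le_max_left (μ univ).toReal (ν univ).toReal
    linarith
  · obtain ⟨s1, s2, s3, s4⟩ := uw_swap γ
    have := uw_aux_le hd ν μ hν hμ (not_le.1 h).le (γ.map Prod.swap) (s1.trans_le h2)
      (s2.trans_le h1)
    rw [s3, s4] at this
    have := le_max_right (μ univ).toReal (ν univ).toReal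
    linarith

lemma uw_aux_approx (μ ν : Measure S) (hμ : μ univ ≤ 1)
    (hν : ν univ ≤ 1) (h : ν univ ≤ μ univ) (ε : ℝ) (hε : 0 < ε) :
    ∃ γ : Measure (S × S), γ.map Prod.fst ≤ μ ∧ γ.map Prod.snd ≤ ν ∧
      ∫ p, dist p.1 p.2 ∂γ + max (μ univ).toReal (ν univ).toReal
      - (γ univ).toReal < uwAux dist μ ν + ε := by
  haveI := uw_fin hμ
  have ne : {r : ℝ | ∃ γ : Measure (S × S), γ Set.univ ≤ 1 ∧
      γ.map Prod.fst ≤ μ ∧ γ.map Prod.snd = ν ∧ r = ∫ p, dist p.1 p.2 ∂γ}.Nonempty := by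
    obtain ⟨π, p1, p2⟩ := uw_extend μ ν hμ hν h 0 (by simpa using Measure.zero_le _)
      (by simpa using Measure.zero_le _)
    refine ⟨_, 0 + π, ?_, p1, p2, rfl⟩
    rw [← uw_mass_snd, p2]; exact hν
  obtain ⟨r, ⟨γ, g0, g1, g2, rfl⟩, hr⟩ := exists_lt_of_csInf_lt ne (lt_add_of_pos_right _ hε)
  refine ⟨γ, g1, g2.le, ?_⟩
  have e : γ univ = ν univ := by rw [← uw_mass_snd, g2]
  rw [max_eq_left (ENNReal.toReal_mono (measure_ne_top _ _) h), e]
  unfold uwAux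
  linarith

lemma uw_approx (μ ν : Measure S) (hμ : μ univ ≤ 1)
    (hν : ν univ ≤ 1) (ε : ℝ) (hε : 0 < ε) :
    ∃ γ : Measure (S × S), γ.map Prod.fst ≤ μ ∧ γ.map Prod.snd ≤ ν ∧
      ∫ p, dist p.1 p.2 ∂γ + max (μ univ).toReal (ν univ).toReal
      - (γ univ).toReal < uwDist dist μ ν + ε := by
  unfold uwDist
  split_ifs with h
  · exact uw_aux_approx μ ν hμ hν h ε hε
  · obtain ⟨γ, h1, h2, h3⟩ := uw_aux_approx ν μ hν hμ (not_le.1 h).le ε hε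
    obtain ⟨s1, s2, s3, s4⟩ := uw_swap γ
    refine ⟨γ.map Prod.swap, s1.trans_le h2, s2.trans_le h1, ?_⟩
    rw [s3, s4, max_comm]; exact h3

lemma uw_mass_le {μ ν : Measure S} (hμ : μ univ ≤ 1) {γ : Measure (S × S)}
    (h1 : γ.map Prod.fst ≤ μ) : (γ univ).toReal ≤ max (μ univ).toReal (ν univ).toReal := by
  haveI := uw_fin hμ
  refine le_max_of_le_left (ENNReal.toReal_mono (measure_ne_top _ _) ?_)
  rw [← uw_mass_fst]; exact h1 univ

lemma uw_nonneg (μ ν : Measure S) (hμ : μ univ ≤ 1) (hν : ν univ ≤ 1) :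
    0 ≤ uwDist dist μ ν := by
  refine le_of_forall_pos_le_add fun ε hε => ?_
  obtain ⟨γ, h1, h2, h3⟩ := uw_approx μ ν hμ hν ε hε
  have := uw_mass_le (ν := ν) hμ h1
  have := uw_cost_nonneg γ
  linarith

lemma uw_symm_le (hd : ∀ x y : S, dist x y ≤ 1) (μ ν : Measure S) (hμ : μ univ ≤ 1)
    (hν : ν univ ≤ 1) : uwDist dist ν μ ≤ uwDist dist μ ν := by
  refine le_of_forall_pos_le_add fun ε hε => ?_
  obtain ⟨γ, h1, h2, h3⟩ := uw_approx μ ν hμ hν ε hε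
  obtain ⟨s1, s2, s3, s4⟩ := uw_swap γ
  have := uw_le hd ν μ hν hμ (γ.map Prod.swap) (s1.trans_le h2) (s2.trans_le h1)
  rw [s3, s4, max_comm] at this
  linarith

lemma uw_self (hd : ∀ x y : S, dist x y ≤ 1) (μ : Measure S) (hμ : μ univ ≤ 1) :
    uwDist dist μ μ = 0 := by
  refine le_antisymm ?_ (uw_nonneg μ μ hμ hμ)
  have hm : Measurable (fun x : S => (x, x)) := by fun_prop
  haveI : SecondCountableTopology S := UniformSpace.secondCountable_of_separable S
  have e1 : (μ.map (fun x : S => (x, x))).map Prod.fst = μ := by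
    rw [Measure.map_map measurable_fst hm]; exact Measure.map_id
  have e2 : (μ.map (fun x : S => (x, x))).map Prod.snd = μ := by
    rw [Measure.map_map measurable_snd hm]; exact Measure.map_id
  have := uw_le hd μ μ hμ hμ (μ.map (fun x => (x, x))) e1.le e2.le
  rw [integral_map hm.aemeasurable (by
    exact (measurable_fst.dist measurable_snd).aestronglyMeasurable),
    Measure.map_apply hm MeasurableSet.univ] at this
  simpa using this

lemma uw_lp (μ ν : Measure S) (hμ : μ univ ≤ 1)
    (hd : ∀ x y : S, dist x y ≤ 1) (γ : Measure (S × S)) (h1 : γ.map Prod.fst ≤ μ)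
    (h2 : γ.map Prod.snd ≤ ν) (hν : ν univ ≤ 1) (δ : ℝ) (hδ : 0 < δ)
    (hc : ∫ p, dist p.1 p.2 ∂γ + max (μ univ).toReal (ν univ).toReal
      - (γ univ).toReal < min (δ / 2) (δ * δ / 2)) (B : Set S) (hB : MeasurableSet B) :
    μ B ≤ ν (Metric.thickening δ B) + ENNReal.ofReal δ := by
  haveI := uw_fin hμ
  haveI := uw_fin hν
  haveI : IsFiniteMeasure γ := uw_fin (by
    rw [← uw_mass_fst]; exact (h1 univ).trans hμ)
  have hT : MeasurableSet (Metric.thickening δ B) := Metric.isOpen_thickening.measurableSet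
  rw [← ENNReal.ofReal_toReal (measure_ne_top μ B),
    ← ENNReal.ofReal_toReal (measure_ne_top ν (Metric.thickening δ B)),
    ← ENNReal.ofReal_add ENNReal.toReal_nonneg hδ.le]
  apply ENNReal.ofReal_le_ofReal
  change μ.real B ≤ ν.real _ + δ
  change _ + max (μ.real univ) (ν.real univ) - γ.real univ < _ at hc
  have r1 : ∀ s, MeasurableSet s → γ.real (Prod.fst ⁻¹' s) ≤ μ.real s := fun s hs =>
    ENNReal.toReal_mono (measure_ne_top _ _)
      (by rw [← Measure.map_apply measurable_fst hs]; exact h1 s)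
  have r2 : ∀ s, MeasurableSet s → γ.real (Prod.snd ⁻¹' s) ≤ ν.real s := fun s hs =>
    ENNReal.toReal_mono (measure_ne_top _ _)
      (by rw [← Measure.map_apply measurable_snd hs]; exact h2 s)
  have a1 := r1 Bᶜ hB.compl
  have a2 := r2 _ hT
  have a3 := measureReal_add_measureReal_compl (μ := μ) hB
  have a4 := measureReal_add_measureReal_compl (μ := γ) (measurable_fst hB)
  rw [← preimage_compl] at a4
  have a5 : γ.real (Prod.fst ⁻¹' B) ≤ γ.real (Prod.snd ⁻¹' (Metric.thickening δ B))
      + γ.real {p : S × S | δ ≤ dist p.1 p.2} := by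
    refine (measureReal_mono ?_).trans (measureReal_union_le _ _)
    rintro ⟨x, y⟩ hx
    by_cases hxy : δ ≤ dist x y
    · exact Or.inr hxy
    · left
      exact Metric.mem_thickening_iff.2 ⟨x, hx, by rw [dist_comm]; exact not_le.1 hxy⟩
  have a6 := mul_meas_ge_le_integral_of_nonneg (μ := γ) (f := fun p : S × S => dist p.1 p.2)
    (Filter.Eventually.of_forall fun _ => dist_nonneg)
    (uw_integrable hd γ _ _ measurable_fst measurable_snd) δ
  have a7 : γ.real univ ≤ max (μ.real univ) (ν.real univ) := uw_mass_le (ν := ν) hμ h1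
  have a8 := lt_of_lt_of_le hc (min_le_left _ _)
  have a9 := lt_of_lt_of_le hc (min_le_right _ _)
  have a10 := uw_cost_nonneg γ
  have a11 : γ.real {p : S × S | δ ≤ dist p.1 p.2} ≤ δ / 2 := by
    refine le_of_mul_le_mul_left (a6.trans ?_) hδ
    linarith
  have a12 := le_max_left (μ.real univ) (ν.real univ)
  linarith

lemma uw_eq (hd : ∀ x y : S, dist x y ≤ 1) (μ ν : Measure S) (hμ : μ univ ≤ 1)
    (hν : ν univ ≤ 1) (h : uwDist dist μ ν = 0) : μ = ν := by
  haveI := uw_fin hμ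
  haveI := uw_fin hν
  have key : ∀ (μ ν : Measure S), μ univ ≤ 1 → ν univ ≤ 1 → uwDist dist μ ν = 0 →
      ∀ δ : ℝ, 0 < δ → ∀ B, MeasurableSet B →
      μ B ≤ ν (Metric.thickening δ B) + ENNReal.ofReal δ := by
    intro μ ν hμ hν h δ hδ B hB
    obtain ⟨γ, h1, h2, h3⟩ := uw_approx μ ν hμ hν (min (δ / 2) (δ * δ / 2)) (by positivity)
    rw [h, zero_add] at h3
    exact uw_lp μ ν hμ hd γ h1 h2 hν δ hδ h3 B hB
  have h' : uwDist dist ν μ = 0 :=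
    le_antisymm (h ▸ uw_symm_le hd μ ν hμ hν) (uw_nonneg _ _ hν hμ)
  have hz : levyProkhorovEDist μ ν = 0 := by
    refine le_antisymm (levyProkhorovEDist_le_of_forall μ ν 0 fun ε B h0 hlt hB => ?_) bot_le
    have hp : 0 < ε.toReal := ENNReal.toReal_pos h0.ne' hlt.ne
    have k1 := key μ ν hμ hν h _ hp B hB
    have k2 := key ν μ hν hμ h' _ hp B hB
    rw [ENNReal.ofReal_toReal hlt.ne] at k1 k2
    exact ⟨k1, k2⟩
  have hcl : ∀ A : Set S, IsClosed A → μ A = ν A := fun A hA =>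
    measure_eq_measure_of_levyProkhorovEDist_eq_zero_of_isClosed hz hA
      ⟨1, one_pos, measure_ne_top _ _⟩ ⟨1, one_pos, measure_ne_top _ _⟩
  refine ext_of_generate_finite _ ?_ isPiSystem_isClosed (fun A hA ↦ hcl A hA)
    (hcl _ isClosed_univ)
  rw [BorelSpace.measurable_eq (α := S), borel_eq_generateFrom_isClosed]

lemma uw_kernel [Nonempty S] (ρ : Measure (S × S)) [IsFiniteMeasure ρ] (ν : Measure S)
    [IsFiniteMeasure ν]
    (h : ρ.map Prod.fst ≤ ν) : ∃ K : Kernel S S, IsFiniteKernel K ∧ (∀ y, K y univ ≤ 1) ∧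
      ρ = ν ⊗ₘ K := by
  have hf : ρ.fst ≤ ν := h
  set a : S → ℝ≥0∞ := fun y => min (ρ.fst.rnDeriv ν y) 1 with ha
  have am : Measurable a := (Measure.measurable_rnDeriv _ _).min measurable_const
  have hae : a =ᵐ[ν] ρ.fst.rnDeriv ν := by
    filter_upwards [Measure.rnDeriv_le_one_of_le hf] with y hy
    exact min_eq_left hy
  have hw : ν.withDensity a = ρ.fst := by
    rw [withDensity_congr_ae hae]
    exact Measure.withDensity_rnDeriv_eq _ _ (Measure.absolutelyContinuous_of_le hf)
  have am' : Measurable (Function.uncurry fun (y _ : S) => a y) := am.comp measurable_fst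
  have app : ∀ y s, (ρ.condKernel.withDensity fun y _ => a y) y s = a y * ρ.condKernel y s := by
    intro y s
    rw [Kernel.withDensity_apply' _ am']
    simp
  have bd : ∀ y, (ρ.condKernel.withDensity fun y _ => a y) y univ ≤ 1 := by
    intro y; rw [app]; simp [ha]
  have fin : IsFiniteKernel (ρ.condKernel.withDensity fun y _ => a y) :=
    ⟨1, ENNReal.one_lt_top, bd⟩
  refine ⟨_, fin, bd, ?_⟩
  ext s hs
  conv_lhs => rw [← ρ.disintegrate ρ.condKernel]
  rw [Measure.compProd_apply hs, Measure.compProd_apply hs, ← hw,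
    lintegral_withDensity_eq_lintegral_mul _ am (Kernel.measurable_kernel_prodMk_left hs)]
  simp [app]

lemma uw_triangle (hd : ∀ x y : S, dist x y ≤ 1) (μ ν ξ : Measure S) (hμ : μ univ ≤ 1)
    (hν : ν univ ≤ 1) (hξ : ξ univ ≤ 1) :
    uwDist dist μ ξ ≤ uwDist dist μ ν + uwDist dist ν ξ := by
  rcases isEmpty_or_nonempty S with hS | hS
  · rw [Subsingleton.elim μ ξ, uw_self hd ξ hξ]
    exact add_nonneg (uw_nonneg _ _ hξ hν) (uw_nonneg _ _ hν hξ)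
  haveI := uw_fin hμ
  haveI := uw_fin hν
  haveI := uw_fin hξ
  refine le_of_forall_pos_le_add fun ε hε => ?_
  obtain ⟨γ₀, h1, h2, h3⟩ := uw_approx μ ν hμ hν (ε/2) (by positivity)
  obtain ⟨γ₂, g1, g2, g3⟩ := uw_approx ν ξ hν hξ (ε/2) (by positivity)
  obtain ⟨s1, s2, s3, s4⟩ := uw_swap γ₀
  rw [← s3, ← s4] at h3
  rw [← s2] at h1
  rw [← s1] at h2
  generalize γ₀.map Prod.swap = γ₁ at h1 h2 h3
  haveI : IsFiniteMeasure γ₁ := uw_fin (by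
    rw [← uw_mass_fst]; exact (h2 univ).trans hν)
  haveI : IsFiniteMeasure γ₂ := uw_fin (by
    rw [← uw_mass_fst]; exact (g1 univ).trans hν)
  obtain ⟨K₁, k1, b1, e1⟩ := uw_kernel γ₁ ν h2
  obtain ⟨K₂, k2, b2, e2⟩ := uw_kernel γ₂ ν g1
  set T : Measure (S × S × S) := ν ⊗ₘ (K₁ ×ₖ K₂) with hT
  have mA : Measurable (fun p : S × S × S => (p.1, p.2.1)) := by fun_prop
  have mC : Measurable (fun p : S × S × S => (p.1, p.2.2)) := by fun_prop
  have tA : T.map (fun p => (p.1, p.2.1)) ≤ γ₁ := by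
    refine Measure.le_iff.2 fun s hs => ?_
    rw [Measure.map_apply mA hs, hT, e1, Measure.compProd_apply (mA hs),
      Measure.compProd_apply hs]
    refine lintegral_mono fun y => ?_
    have : Prod.mk y ⁻¹' ((fun p : S × S × S => (p.1, p.2.1)) ⁻¹' s)
        = (Prod.mk y ⁻¹' s) ×ˢ univ := by ext; simp
    rw [this, Kernel.prod_apply_prod]
    exact mul_le_of_le_one_right' (b2 y)
  have tC : T.map (fun p => (p.1, p.2.2)) ≤ γ₂ := by
    refine Measure.le_iff.2 fun s hs => ?_
    rw [Measure.map_apply mC hs, hT, e2, Measure.compProd_apply (mC hs),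
      Measure.compProd_apply hs]
    refine lintegral_mono fun y => ?_
    have : Prod.mk y ⁻¹' ((fun p : S × S × S => (p.1, p.2.2)) ⁻¹' s)
        = univ ×ˢ (Prod.mk y ⁻¹' s) := by ext; simp
    rw [this, Kernel.prod_apply_prod]
    exact mul_le_of_le_one_left' (b1 y)
  have mass : γ₁ univ + γ₂ univ ≤ ν univ + T univ := by
    rw [hT, e1, e2, Measure.compProd_apply MeasurableSet.univ,
      Measure.compProd_apply MeasurableSet.univ, Measure.compProd_apply MeasurableSet.univ]
    simp only [preimage_univ]
    rw [← lintegral_one, ← lintegral_add_left (K₁.measurable_coe MeasurableSet.univ),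
      ← lintegral_add_left measurable_const]
    refine lintegral_mono fun y => ?_
    rw [← univ_prod_univ, Kernel.prod_apply_prod]
    have q1 := b1 y
    have q2 := b2 y
    generalize K₁ y univ = a at q1
    generalize K₂ y univ = b at q2
    lift a to NNReal using (lt_of_le_of_lt q1 ENNReal.one_lt_top).ne
    lift b to NNReal using (lt_of_le_of_lt q2 ENNReal.one_lt_top).ne
    have r1 : (a : ℝ) ≤ 1 := by exact_mod_cast q1
    have r2 : (b : ℝ) ≤ 1 := by exact_mod_cast q2
    have r3 : a + b ≤ 1 + a * b := by
      rw [← NNReal.coe_le_coe]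
      push_cast
      nlinarith
    have r4 : (a : ℝ≥0∞) + b ≤ 1 + a * b := by exact_mod_cast r3
    exact r4
  have T1 : T univ ≤ 1 := by
    have := tA univ
    rw [Measure.map_apply mA MeasurableSet.univ, preimage_univ] at this
    refine this.trans ?_
    rw [← uw_mass_fst]; exact (h2 univ).trans hν
  haveI := uw_fin T1
  have mP : Measurable (fun p : S × S × S => p.2) := measurable_snd
  haveI : SecondCountableTopology S := UniformSpace.secondCountable_of_separable S
  have md : Measurable (fun p : S × S => dist p.1 p.2) := measurable_fst.dist measurable_snd
  have cA : ∫ p, dist p.1 p.2.1 ∂T ≤ ∫ p, dist p.1 p.2 ∂γ₁ := by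
    have := integral_mono_measure tA (Filter.Eventually.of_forall fun _ => dist_nonneg)
      (uw_integrable hd γ₁ _ _ measurable_fst measurable_snd)
    rwa [integral_map mA.aemeasurable md.aestronglyMeasurable] at this
  have cC : ∫ p, dist p.1 p.2.2 ∂T ≤ ∫ p, dist p.1 p.2 ∂γ₂ := by
    have := integral_mono_measure tC (Filter.Eventually.of_forall fun _ => dist_nonneg)
      (uw_integrable hd γ₂ _ _ measurable_fst measurable_snd)
    rwa [integral_map mC.aemeasurable md.aestronglyMeasurable] at this
  have fA : (T.map Prod.snd).map Prod.fst ≤ μ := by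
    have := (Measure.map_mono tA measurable_snd).trans h1
    rw [Measure.map_map measurable_snd mA] at this
    rwa [Measure.map_map measurable_fst measurable_snd]
  have fC : (T.map Prod.snd).map Prod.snd ≤ ξ := by
    have := (Measure.map_mono tC measurable_snd).trans g2
    rw [Measure.map_map measurable_snd mC] at this
    rwa [Measure.map_map measurable_snd measurable_snd]
  have main := uw_le hd μ ξ hμ hξ (T.map Prod.snd) fA fC
  rw [integral_map measurable_snd.aemeasurable md.aestronglyMeasurable,
    Measure.map_apply measurable_snd MeasurableSet.univ, preimage_univ] at main
  have iA := uw_integrable hd T (fun p => p.1) (fun p => p.2.1) (by fun_prop) (by fun_prop)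
  have iC := uw_integrable hd T (fun p => p.1) (fun p => p.2.2) (by fun_prop) (by fun_prop)
  have iP := uw_integrable hd T (fun p => p.2.1) (fun p => p.2.2) (by fun_prop) (by fun_prop)
  have tri : ∫ p, dist p.2.1 p.2.2 ∂T ≤ ∫ p, dist p.1 p.2.1 ∂T + ∫ p, dist p.1 p.2.2 ∂T := by
    rw [← integral_add iA iC]
    exact integral_mono iP (iA.add iC) fun p => dist_triangle_left _ _ _
  have mass' : (γ₁ univ).toReal + (γ₂ univ).toReal ≤ (ν univ).toReal + (T univ).toReal := by
    rw [← ENNReal.toReal_add (measure_ne_top _ _) (measure_ne_top _ _),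
      ← ENNReal.toReal_add (measure_ne_top _ _) (measure_ne_top _ _)]
    exact ENNReal.toReal_mono (by finiteness) mass
  have mx : max (μ univ).toReal (ξ univ).toReal + (ν univ).toReal ≤
      max (μ univ).toReal (ν univ).toReal + max (ν univ).toReal (ξ univ).toReal := by
    grind
  linarith

lemma uw_classical (μ ν : Measure S) (hμ : IsProbabilityMeasure μ)
    (hν : IsProbabilityMeasure ν) : uwDist dist μ ν = wassersteinDist dist μ ν := by
  unfold uwDist uwAux wassersteinDist
  simp only [measure_univ, le_refl, if_true, sub_self, zero_add]
  congr 1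
  ext r
  constructor
  · rintro ⟨γ, -, g1, g2, rfl⟩
    refine ⟨γ, ?_, g2, rfl⟩
    have e : γ univ = 1 := by rw [← uw_mass_snd, g2, measure_univ]
    haveI : IsProbabilityMeasure γ := ⟨e⟩
    exact Measure.eq_of_le_of_measure_univ_eq g1 (by rw [uw_mass_fst, e, measure_univ])
  · rintro ⟨γ, g1, g2, rfl⟩
    refine ⟨γ, ?_, g1.le, g2, rfl⟩
    rw [← uw_mass_snd, g2, measure_univ]

end helpers

/-- On a complete separable metric space of diameter at most one, the unbalanced
Wasserstein distance is a metric on the Borel measures of total mass at most one,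
and it coincides with the classical Wasserstein distance on probability measures. -/
theorem unbalanced_wasserstein_metric {S : Type} [MetricSpace S] [CompleteSpace S]
    [TopologicalSpace.SeparableSpace S] [MeasurableSpace S] [BorelSpace S]
    (hd : ∀ x y : S, dist x y ≤ 1) :
    (∀ μ ν : Measure S, μ Set.univ ≤ 1 → ν Set.univ ≤ 1 → 0 ≤ uwDist dist μ ν) ∧
    (∀ μ ν : Measure S, μ Set.univ ≤ 1 → ν Set.univ ≤ 1 →
      uwDist dist μ ν = uwDist dist ν μ) ∧
    (∀ μ ν : Measure S, μ Set.univ ≤ 1 → ν Set.univ ≤ 1 →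
      (uwDist dist μ ν = 0 ↔ μ = ν)) ∧
    (∀ μ ν ξ : Measure S, μ Set.univ ≤ 1 → ν Set.univ ≤ 1 → ξ Set.univ ≤ 1 →
      uwDist dist μ ξ ≤ uwDist dist μ ν + uwDist dist ν ξ) ∧
    (∀ μ ν : Measure S, IsProbabilityMeasure μ → IsProbabilityMeasure ν →
      uwDist dist μ ν = wassersteinDist dist μ ν) := by
  refine ⟨fun μ ν hμ hν => uw_nonneg μ ν hμ hν, fun μ ν hμ hν =>
      le_antisymm (uw_symm_le hd ν μ hν hμ) (uw_symm_le hd μ ν hμ hν),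
    fun μ ν hμ hν => ⟨uw_eq hd μ ν hμ hν, ?_⟩,
    fun μ ν ξ hμ hν hξ => uw_triangle hd μ ν ξ hμ hν hξ, uw_classical⟩
  rintro rfl
  exact uw_self hd μ hμ

end
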